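/- arXiv:2209.14524 — 3 statements merged into one kernel-verified Lean document; each statement's English description precedes it below -/
import Mathlib

section
/- There exists a function f : ℕ × ℕ → ℕ such that for all positive integers s and t, if M is a matroid with the (s,2s,t,2t)-property and |E(M)| ≥ f(s,t), then M is an (s,t)-spike. -/
open Set Function

namespace Matroid

variable {α : Type*}

/-- A circuit of a matroid: a minimal dependent set. -/
def IsCircuit' (M : Matroid α) (C : Set α) : Prop := Minimal M.Dep C

/-- A cocircuit of a matroid: a circuit of the dual matroid. -/
def IsCocircuit' (M : Matroid α) (C : Set α) : Prop := M✶.IsCircuit' C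

/-- The `ℕ`-valued rank of a set `X` in a matroid `M`:
the size of a largest independent subset of `X`. -/
noncomputable def rk' (M : Matroid α) (X : Set α) : ℕ :=
  sSup {n : ℕ | ∃ I, M.Indep I ∧ I ⊆ X ∧ I.ncard = n}

/-- The connectivity function `λ(X) = r(X) + r(E − X) − r(M)`. -/
noncomputable def lam' (M : Matroid α) (X : Set α) : ℕ :=
  M.rk' X + M.rk' (M.E \ X) - M.rk' M.E

/-- The `(s,u,t,v)`-property: every `s`-element subset of the ground set is contained in a
circuit of size `u`, and every `t`-element subset is contained in a cocircuit of size `v`. -/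
def HasProp (M : Matroid α) (s u t v : ℕ) : Prop :=
  (∀ S ⊆ M.E, S.ncard = s → ∃ C, M.IsCircuit' C ∧ C.ncard = u ∧ S ⊆ C) ∧
  (∀ T ⊆ M.E, T.ncard = t → ∃ C, M.IsCocircuit' C ∧ C.ncard = v ∧ T ⊆ C)

/-- A `t`-echidna of order `n`: a family of `n` pairwise disjoint `2`-element subsets of the
ground set (spines) such that the union of any `t` spines is a circuit.
(A `t`-coechidna of `M` is a `t`-echidna of `M✶`.) -/
def IsEchidna (M : Matroid α) (t : ℕ) {n : ℕ} (S : Fin n → Set α) : Prop :=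
  (∀ i, S i ⊆ M.E) ∧ (∀ i, (S i).ncard = 2) ∧
  Pairwise (Function.onFun Disjoint S) ∧
  ∀ I : Finset (Fin n), I.card = t → M.IsCircuit' (⋃ i ∈ I, S i)

/-- `M` is an `(s,t)`-spike with associated partition `(A 1, …, A m)`: the `A i` are `m`
pairwise disjoint pairs partitioning the ground set, with `m ≥ max s t`, such that the union of
any `s` pairs is a circuit and the union of any `t` pairs is a cocircuit. -/
def IsSpike (M : Matroid α) (s t : ℕ) {m : ℕ} (A : Fin m → Set α) : Prop :=
  max s t ≤ m ∧ (⋃ i, A i) = M.E ∧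
  Pairwise (Function.onFun Disjoint A) ∧ (∀ i, (A i).ncard = 2) ∧
  (∀ I : Finset (Fin m), I.card = s → M.IsCircuit' (⋃ i ∈ I, A i)) ∧
  (∀ I : Finset (Fin m), I.card = t → M.IsCocircuit' (⋃ i ∈ I, A i))

end Matroid

universe u

open Matroid

theorem aux_null {α : Type u} [DecidableEq α] (M : Matroid α) (hE : M.E.Finite) (c : ℕ)
    (hc : 0 < c)
    (hcirc : ∀ e ∈ M.E, ∃ C : Finset α, M.IsCircuit (C : Set α) ∧ C.card ≤ c ∧ e ∈ C) (k : ℕ)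
    (hn : c * k ≤ M.E.ncard) :
    ∃ W : Finset α, (W : Set α) ⊆ M.E ∧ W.card ≤ c * k ∧
      M.eRk (W : Set α) + (k : ℕ∞) ≤ (W.card : ℕ∞) := by
  induction k with
  | zero => exact ⟨∅, by simp⟩
  | succ k ih =>
    obtain ⟨W, hWE, hWc, hWr⟩ := ih (by nlinarith)
    have hex : ∃ e ∈ M.E, e ∉ (W : Set α) := by
      by_contra! hcon
      have h1 : M.E.ncard ≤ (W : Set α).ncard := Set.ncard_le_ncard hcon W.finite_toSet
      rw [Set.ncard_coe_finset] at h1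
      nlinarith
    obtain ⟨e, heE, heW⟩ := hex
    obtain ⟨C, hC, hCc, heC⟩ := hcirc e heE
    have heW' : e ∉ W := by simpa using heW
    refine ⟨W ∪ C, ?_, ?_, ?_⟩
    · push_cast
      exact Set.union_subset hWE hC.subset_ground
    · have := Finset.card_union_le W C
      nlinarith
    · set Z := (C \ W).erase e with hZ
      have hcard : (W ∪ C).card = W.card + Z.card + 1 := by
        have h1 : (W ∪ C).card = W.card + (C \ W).card := by
          rw [Finset.union_comm, ← Finset.card_sdiff_add_card C W, add_comm]
        have h2 : Z.card + 1 = (C \ W).card :=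
          Finset.card_erase_add_one (by simp [heC, heW'])
        omega
      have hsub : ((W ∪ C : Finset α) : Set α) ⊆ M.closure ((W : Set α) ∪ Z) := by
        have hg : (W : Set α) ∪ Z ⊆ M.E := by
          apply Set.union_subset hWE
          intro x hx
          apply hC.subset_ground
          simp [hZ] at hx
          simpa using hx.1.1
        have h0 : (W : Set α) ∪ Z ⊆ M.closure ((W : Set α) ∪ Z) := M.subset_closure _ hg
        intro x hx
        by_cases hxe : x = e
        · subst hxe
          have := hC.mem_closure_sdiff_singleton_of_mem (e := x) (by simpa using heC)
          refine M.closure_subset_closure ?_ this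
          intro y hy
          simp [hZ] at hy ⊢
          tauto
        · apply h0
          simp [hZ] at hx ⊢
          tauto
      have hr : M.eRk ((W ∪ C : Finset α) : Set α) ≤ M.eRk (W : Set α) + (Z.card : ℕ∞) := by
        calc M.eRk ((W ∪ C : Finset α) : Set α) ≤ M.eRk (M.closure ((W : Set α) ∪ Z)) :=
              M.eRk_mono hsub
          _ = M.eRk ((W : Set α) ∪ Z) := M.eRk_closure_eq _
          _ ≤ M.eRk (W : Set α) + (Z : Set α).encard := M.eRk_union_le_eRk_add_encard _ _
          _ = _ := by rw [Set.encard_coe_eq_coe_finsetCard]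
      rw [hcard]
      push_cast
      calc M.eRk ((W : Set α) ∪ C) + ((k : ℕ∞) + 1)
          ≤ (M.eRk (W : Set α) + (Z.card : ℕ∞)) + ((k : ℕ∞) + 1) := by
            gcongr
            simpa using hr
        _ = (M.eRk (W : Set α) + (k : ℕ∞)) + Z.card + 1 := by ring
        _ ≤ _ := by gcongr

theorem aux_avoid {α : Type u} [DecidableEq α] (M : Matroid α) (hE : M.E.Finite) (c : ℕ)
    (hc : 0 < c)
    (hcirc : ∀ e ∈ M.E, ∃ C : Finset α, M.IsCircuit (C : Set α) ∧ C.card ≤ c ∧ e ∈ C)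
    (b : ℕ) (X : Finset α) (hX : X.card ≤ b)
    (hn : c * (b + 1) ≤ M.E.ncard) :
    ∃ C : Finset α, M.IsCircuit (C : Set α) ∧ Disjoint C X ∧ C.card ≤ c * (b + 1) := by
  obtain ⟨W, hWE, hWc, hWr⟩ := aux_null M hE c hc hcirc (b + 1) hn
  have hdep : M.Dep ((W \ X : Finset α) : Set α) := by
    have hsubE : ((W \ X : Finset α) : Set α) ⊆ M.E :=
      (Finset.coe_subset.2 Finset.sdiff_subset).trans hWE
    rw [← Matroid.not_indep_iff hsubE]
    intro hI
    have h1 := hI.encard_le_eRk_of_subset (X := (W : Set α))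
      (Finset.coe_subset.2 Finset.sdiff_subset)
    rw [Set.encard_coe_eq_coe_finsetCard] at h1
    have h2 : (((W \ X).card + (b + 1) : ℕ) : ℕ∞) ≤ (W.card : ℕ∞) := by
      refine le_trans ?_ hWr
      push_cast
      gcongr
    have h3 : (W \ X).card + (b + 1) ≤ W.card := by exact_mod_cast h2
    have h4 := Finset.le_card_sdiff X W
    omega
  obtain ⟨C, hCs, hC⟩ := hdep.exists_isCircuit_subset
  have hCf : C.Finite := (Finset.finite_toSet _).subset hCs
  lift C to Finset α using hCf
  have hCs' : C ⊆ W \ X := by exact_mod_cast hCs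
  refine ⟨C, hC, ?_, ?_⟩
  · exact Finset.disjoint_of_subset_left hCs' Finset.sdiff_disjoint
  · exact (Finset.card_le_card (hCs'.trans Finset.sdiff_subset)).trans hWc

def auxN (c : ℕ) : ℕ → ℕ → ℕ
  | 0, _ => 0
  | k + 1, b => max (c * (b + 1)) (auxN c k (b + c * (b + 1)))

theorem aux_trans {α : Type u} [DecidableEq α] (M : Matroid α) (hE : M.E.Finite) (c : ℕ)
    (hc : 0 < c)
    (hcirc : ∀ e ∈ M.E, ∃ C : Finset α, M.IsCircuit (C : Set α) ∧ C.card ≤ c ∧ e ∈ C)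
    (k : ℕ) : ∀ (b : ℕ) (X : Finset α), X.card ≤ b → auxN c k b ≤ M.E.ncard →
    ∃ T : Finset α, (T : Set α) ⊆ M.E ∧ T.card = k ∧ Disjoint T X ∧
      ∀ D : Finset α, (∀ C : Finset α, M.IsCircuit (C : Set α) → (C ∩ D).card ≠ 1) → T ⊆ D →
        2 * k ≤ (D \ X).card := by
  induction k with
  | zero => intro b X _ _; exact ⟨∅, by simp⟩
  | succ k ih =>
    intro b X hX hn
    rw [auxN] at hn
    obtain ⟨C, hC, hCX, hCc⟩ := aux_avoid M hE c hc hcirc b X hX (le_trans (le_max_left _ _) hn)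
    obtain ⟨T, hTE, hTc, hTX, hT⟩ := ih (b + c * (b + 1)) (X ∪ C)
      ((Finset.card_union_le _ _).trans (by omega)) (le_trans (le_max_right _ _) hn)
    obtain ⟨e, he⟩ := hC.nonempty
    have heC : e ∈ C := by simpa using he
    rw [Finset.disjoint_union_right] at hTX
    have heT : e ∉ T := fun h => Finset.disjoint_left.1 hTX.2 h heC
    refine ⟨insert e T, ?_, ?_, ?_, ?_⟩
    · push_cast
      exact Set.insert_subset (hC.subset_ground he) hTE
    · rw [Finset.card_insert_of_notMem heT, hTc]
    · rw [Finset.disjoint_insert_left]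
      exact ⟨Finset.disjoint_left.1 hCX heC, hTX.1⟩
    · intro D hD hTD
      have h1 := hT D hD ((Finset.subset_insert _ _).trans hTD)
      have h2 : 2 ≤ (C ∩ D).card := by
        have h3 := hD C hC
        have h4 : 0 < (C ∩ D).card :=
          Finset.card_pos.2 ⟨e, by simp [heC, hTD (Finset.mem_insert_self e T)]⟩
        omega
      have h5 : (C ∩ D) ∪ (D \ (X ∪ C)) ⊆ D \ X := by
        intro y hy
        have : y ∈ C → y ∉ X := fun h => Finset.disjoint_left.1 hCX h
        simp at hy ⊢
        tauto
      have h6 : Disjoint (C ∩ D) (D \ (X ∪ C)) := by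
        rw [Finset.disjoint_left]
        intro y hy
        simp at hy ⊢
        tauto
      have h7 := Finset.card_le_card h5
      rw [Finset.card_union_of_disjoint h6] at h7
      omega

/-- Every element of the ground set lies in a `2t`-cocircuit meeting a prescribed bounded set in at
most two elements. -/
theorem aux_H {α : Type u} [DecidableEq α] (M : Matroid α) (hE : M.E.Finite) (c t : ℕ)
    (hc : 0 < c) (ht : 0 < t)
    (hcirc : ∀ e ∈ M.E, ∃ C : Finset α, M.IsCircuit (C : Set α) ∧ C.card ≤ c ∧ e ∈ C)
    (hco : ∀ T : Finset α, (T : Set α) ⊆ M.E → T.card = t →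
      ∃ D : Finset α, M✶.IsCircuit (D : Set α) ∧ D.card = 2 * t ∧ T ⊆ D)
    (b : ℕ) (hn : auxN c (t - 1) (b + 1) ≤ M.E.ncard) (x : α) (hx : x ∈ M.E)
    (Y : Finset α) (hY : Y.card ≤ b) :
    ∃ D : Finset α, (M✶.IsCircuit (D : Set α) ∧ D.card = 2 * t) ∧ x ∈ D ∧ (D ∩ Y).card ≤ 2 := by
  obtain ⟨T, hTE, hTc, hTX, hT⟩ := aux_trans M hE c hc hcirc (t - 1) (b + 1) (insert x Y)
    ((Finset.card_insert_le _ _).trans (by omega)) hn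
  rw [Finset.disjoint_insert_right] at hTX
  obtain ⟨D, hD, hDc, hTD⟩ := hco (insert x T)
    (by push_cast; exact Set.insert_subset hx hTE)
    (by rw [Finset.card_insert_of_notMem hTX.1]; omega)
  refine ⟨D, ⟨hD, hDc⟩, hTD (Finset.mem_insert_self _ _), ?_⟩
  have h1 := hT D (fun C hC h => by
    obtain ⟨e, he⟩ := Finset.card_eq_one.1 h
    refine hC.inter_isCocircuit_ne_singleton hD (e := e) ?_
    have := congrArg (fun F : Finset α => (F : Set α)) he
    simpa using this) ((Finset.subset_insert _ _).trans hTD)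
  have h2 := Finset.card_sdiff_add_card_inter D (insert x Y)
  have h3 : (D ∩ Y).card ≤ (D ∩ insert x Y).card :=
    Finset.card_le_card (Finset.inter_subset_inter_left (Finset.subset_insert _ _))
  omega

/-- The combinatorial core: elements come in pairs. -/
theorem aux_pair {α : Type u} [DecidableEq α] (P Q : Finset α → Prop) (p q : ℕ)
    (hP : ∀ C, P C → C.card ≤ p) (hQ : ∀ D, Q D → D.card ≤ q)
    (orth : ∀ C D, P C → Q D → (C ∩ D).card ≠ 1) (x : α)
    (HP : ∀ Y : Finset α, Y.card ≤ 3 * (p + q) → ∃ C, P C ∧ x ∈ C ∧ (C ∩ Y).card ≤ 2)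
    (HQ : ∀ Y : Finset α, Y.card ≤ 3 * (p + q) → ∃ D, Q D ∧ x ∈ D ∧ (D ∩ Y).card ≤ 2) :
    ∃ z, z ≠ x ∧ (∀ C, P C → x ∈ C → z ∈ C) ∧ (∀ D, Q D → x ∈ D → z ∈ D) ∧
      ∃ C C', P C ∧ P C' ∧ z ∈ C ∧ z ∈ C' ∧ ∀ w ∈ C, w ∈ C' → w = x ∨ w = z := by
  have orth2 : ∀ C D, P C → Q D → x ∈ C → x ∈ D → 2 ≤ (C ∩ D).card := by
    intro C D hC hD hxC hxD
    have h1 := orth C D hC hD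
    have h2 : 0 < (C ∩ D).card := Finset.card_pos.2 ⟨x, by simp [hxC, hxD]⟩
    omega
  have key : ∀ A B Y : Finset α, B ⊆ Y → 2 ≤ (A ∩ B).card → (A ∩ Y).card ≤ 2 →
      A ∩ B = A ∩ Y := by
    intro A B Y hBY h1 h2
    exact Finset.eq_of_subset_of_card_le (Finset.inter_subset_inter_left hBY) (by omega)
  obtain ⟨C0, hC0, hx0, -⟩ := HP ∅ (by simp)
  obtain ⟨C1, hC1, hx1, h01⟩ := HP C0 (by have := hP C0 hC0; omega)
  have c0 := hP C0 hC0
  have c1 := hP C1 hC1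
  obtain ⟨D0, hD0, hxD0, hD0c⟩ := HQ (C0 ∪ C1) ((Finset.card_union_le _ _).trans (by omega))
  have e0 := key D0 C0 (C0 ∪ C1) Finset.subset_union_left
    (by rw [Finset.inter_comm]; exact orth2 _ _ hC0 hD0 hx0 hxD0) hD0c
  have e1 := key D0 C1 (C0 ∪ C1) Finset.subset_union_right
    (by rw [Finset.inter_comm]; exact orth2 _ _ hC1 hD0 hx1 hxD0) hD0c
  have o0 := orth2 _ _ hC0 hD0 hx0 hxD0
  obtain ⟨z, hz, hzx⟩ := Finset.exists_mem_ne (by omega : 1 < (C0 ∩ D0).card) x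
  rw [Finset.mem_inter] at hz
  have hz1 : z ∈ C1 := by
    have : z ∈ D0 ∩ C1 := by rw [e1, ← e0]; simp [hz]
    exact (Finset.mem_inter.1 this).2
  -- a set with two elements containing `x, z` is `{x, z}`
  have two : ∀ A : Finset α, A.card ≤ 2 → x ∈ A → z ∈ A → ∀ w ∈ A, w = x ∨ w = z := by
    intro A hA hxA hzA w hw
    have : ({x, z} : Finset α) = A :=
      Finset.eq_of_subset_of_card_le (by
        intro y hy
        simp at hy
        rcases hy with rfl | rfl <;> assumption) (by rw [Finset.card_pair hzx.symm]; exact hA)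
    rw [← this] at hw
    simpa using hw
  have hCC := two (C1 ∩ C0) h01 (by simp [hx0, hx1]) (by simp [hz1, hz])
  have hD0Y := two (D0 ∩ (C0 ∪ C1)) hD0c (by simp [hx0, hxD0]) (by simp [hz])
  -- second cocircuit
  have d0 := hQ D0 hD0
  obtain ⟨D1, hD1, hxD1, hD1c⟩ := HQ (C0 ∪ C1 ∪ D0)
    ((Finset.card_union_le _ _).trans (by have := Finset.card_union_le C0 C1; omega))
  have f0 := key D1 C0 (C0 ∪ C1 ∪ D0)
    (Finset.subset_union_left.trans Finset.subset_union_left)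
    (by rw [Finset.inter_comm]; exact orth2 _ _ hC0 hD1 hx0 hxD1) hD1c
  have f1 := key D1 C1 (C0 ∪ C1 ∪ D0)
    (Finset.subset_union_right.trans Finset.subset_union_left)
    (by rw [Finset.inter_comm]; exact orth2 _ _ hC1 hD1 hx1 hxD1) hD1c
  have o1 := orth2 _ _ hC0 hD1 hx0 hxD1
  have hzD1 : z ∈ D1 := by
    obtain ⟨y, hy, hyx⟩ := Finset.exists_mem_ne (by omega : 1 < (C0 ∩ D1).card) x
    rw [Finset.mem_inter] at hy
    have hy1 : y ∈ D1 ∩ C1 := by rw [f1, ← f0]; simp [hy]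
    rcases hCC y (by simp [hy.1, (Finset.mem_inter.1 hy1).2]) with h | h
    · exact absurd h hyx
    · rw [← h]; exact hy.2
  have hDD : ∀ w ∈ D1, w ∈ D0 → w = x ∨ w = z := by
    intro w hw hw0
    exact two (D1 ∩ (C0 ∪ C1 ∪ D0)) hD1c (by simp [hxD1, hx0]) (by simp [hzD1, hz]) w
      (by simp [hw, hw0])
  have d1 := hQ D1 hD1
  refine ⟨z, hzx, ?_, ?_, C0, C1, hC0, hC1, hz.1, hz1, fun w hw hw' => hCC w (by simp [hw, hw'])⟩
  · intro C2 hC2 hx2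
    have c2 := hP C2 hC2
    obtain ⟨D, hD, hxD, hDc⟩ := HQ (C0 ∪ C1 ∪ C2)
      ((Finset.card_union_le _ _).trans (by have := Finset.card_union_le C0 C1; omega))
    have g0 := key D C0 (C0 ∪ C1 ∪ C2)
      (Finset.subset_union_left.trans Finset.subset_union_left)
      (by rw [Finset.inter_comm]; exact orth2 _ _ hC0 hD hx0 hxD) hDc
    have g1 := key D C1 (C0 ∪ C1 ∪ C2)
      (Finset.subset_union_right.trans Finset.subset_union_left)
      (by rw [Finset.inter_comm]; exact orth2 _ _ hC1 hD hx1 hxD) hDc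
    have g2 := key D C2 (C0 ∪ C1 ∪ C2) Finset.subset_union_right
      (by rw [Finset.inter_comm]; exact orth2 _ _ hC2 hD hx2 hxD) hDc
    have o := orth2 _ _ hC0 hD hx0 hxD
    obtain ⟨y, hy, hyx⟩ := Finset.exists_mem_ne (by omega : 1 < (C0 ∩ D).card) x
    rw [Finset.mem_inter] at hy
    have hy1 : y ∈ D ∩ C1 := by rw [g1, ← g0]; simp [hy]
    have hy2 : y ∈ D ∩ C2 := by rw [g2, ← g0]; simp [hy]
    rcases hCC y (by simp [hy.1, (Finset.mem_inter.1 hy1).2]) with h | h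
    · exact absurd h hyx
    · rw [← h]; exact (Finset.mem_inter.1 hy2).2
  · intro D2 hD2 hx2
    have d2 := hQ D2 hD2
    obtain ⟨C, hC, hxC, hCc⟩ := HP (D0 ∪ D1 ∪ D2)
      ((Finset.card_union_le _ _).trans (by have := Finset.card_union_le D0 D1; omega))
    have g0 := key C D0 (D0 ∪ D1 ∪ D2)
      (Finset.subset_union_left.trans Finset.subset_union_left)
      (orth2 _ _ hC hD0 hxC hxD0) hCc
    have g1 := key C D1 (D0 ∪ D1 ∪ D2)
      (Finset.subset_union_right.trans Finset.subset_union_left)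
      (orth2 _ _ hC hD1 hxC hxD1) hCc
    have g2 := key C D2 (D0 ∪ D1 ∪ D2) Finset.subset_union_right
      (orth2 _ _ hC hD2 hxC hx2) hCc
    have o := orth2 _ _ hC hD0 hxC hxD0
    obtain ⟨y, hy, hyx⟩ := Finset.exists_mem_ne (by omega : 1 < (C ∩ D0).card) x
    have hy1 : y ∈ C ∩ D1 := by rw [g1, ← g0]; exact hy
    have hy2 : y ∈ C ∩ D2 := by rw [g2, ← g0]; exact hy
    rw [Finset.mem_inter] at hy
    rcases hDD y (Finset.mem_inter.1 hy1).2 hy.2 with h | h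
    · exact absurd h hyx
    · rw [← h]; exact (Finset.mem_inter.1 hy2).2

/-- If `π` is a fixed point free involution of `E` respected by all the members of a family,
then unions of `s` pairs belong to the family. -/
theorem aux_union {α : Type u} [DecidableEq α] (E : Set α) (P : Finset α → Prop) (s : ℕ)
    (hP : ∀ S : Finset α, (S : Set α) ⊆ E → S.card = s → ∃ C, P C ∧ C.card = 2 * s ∧ S ⊆ C)
    (π : α → α) (hπ : ∀ C, P C → C.card = 2 * s → ∀ x ∈ E, x ∈ C → π x ∈ C)
    {m : ℕ} (A : Fin m → Set α) (a : Fin m → α) (haE : ∀ i, a i ∈ E) (hne : ∀ i, π (a i) ≠ a i)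
    (hA : ∀ i, A i = {a i, π (a i)}) (hdis : Pairwise (Function.onFun Disjoint A))
    (I : Finset (Fin m)) (hI : I.card = s) :
    ∃ C : Finset α, P C ∧ (C : Set α) = ⋃ i ∈ I, A i := by
  have hinj : Function.Injective a := by
    intro i j hij
    by_contra hne'
    have := hdis hne'
    exact Set.disjoint_left.1 this (by rw [hA i]; simp : a i ∈ A i) (by rw [hA j, hij]; simp)
  obtain ⟨C, hC, hCc, hSC⟩ := hP (I.image a)
    (by intro y hy; simp at hy; obtain ⟨i, _, rfl⟩ := hy; exact haE i)
    (by rw [Finset.card_image_of_injective _ hinj, hI])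
  refine ⟨C, hC, ?_⟩
  set U : Finset α := I.biUnion (fun i => {a i, π (a i)}) with hU
  have hUA : (U : Set α) = ⋃ i ∈ I, A i := by
    simp [hU, hA]
  have hUc : U.card = 2 * s := by
    rw [hU, Finset.card_biUnion]
    · rw [Finset.sum_congr rfl (fun i _ => Finset.card_pair (hne i).symm)]
      simp [hI, mul_comm]
    · intro i _ j _ hij
      have := hdis hij
      rw [Function.onFun, hA, hA] at this
      rw [Function.onFun, ← Finset.disjoint_coe]
      simpa using this
  have hUC : U ⊆ C := by
    intro y hy
    simp [hU] at hy
    obtain ⟨i, hi, h | h⟩ := hy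
    · rw [h]; exact hSC (Finset.mem_image_of_mem _ hi)
    · rw [h]; exact hπ C hC hCc _ (haE i) (hSC (Finset.mem_image_of_mem _ hi))
  have : U = C := Finset.eq_of_subset_of_card_le hUC (by omega)
  rw [← this, hUA]

theorem aux_conv {α : Type u} [DecidableEq α] (M : Matroid α) (s : ℕ) (hs : 0 < s)
    (h : ∀ S ⊆ M.E, S.ncard = s → ∃ C, M.IsCircuit' C ∧ C.ncard = 2 * s ∧ S ⊆ C)
    (S : Finset α) (hS : (S : Set α) ⊆ M.E) (hc : S.card = s) :
    ∃ C : Finset α, M.IsCircuit (C : Set α) ∧ C.card = 2 * s ∧ S ⊆ C := by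
  obtain ⟨C, hC, hCc, hSC⟩ := h S hS (by rw [Set.ncard_coe_finset, hc])
  have hf : C.Finite := Set.finite_of_ncard_pos (by omega)
  lift C to Finset α using hf
  rw [Set.ncard_coe_finset] at hCc
  exact ⟨C, hC, hCc, by exact_mod_cast hSC⟩

theorem aux_elem {α : Type u} [DecidableEq α] (M : Matroid α) (hE : M.E.Finite) (s : ℕ)
    (hs : 0 < s) (hn : s ≤ M.E.ncard)
    (h : ∀ S : Finset α, (S : Set α) ⊆ M.E → S.card = s →
      ∃ C : Finset α, M.IsCircuit (C : Set α) ∧ C.card = 2 * s ∧ S ⊆ C)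
    (e : α) (he : e ∈ M.E) :
    ∃ C : Finset α, M.IsCircuit (C : Set α) ∧ C.card ≤ 2 * s ∧ e ∈ C := by
  have hn' : s ≤ hE.toFinset.card := by rwa [← Set.ncard_eq_toFinset_card _ hE]
  obtain ⟨S, h1, h2, h3⟩ := Finset.exists_subsuperset_card_eq
    (s := {e}) (t := hE.toFinset) (n := s) (by simpa using he) (by rw [Finset.card_singleton]; exact hs) hn'
  obtain ⟨C, hC, hCc, hSC⟩ := h S (by intro y hy; simpa using h2 hy) h3
  exact ⟨C, hC, hCc.le, hSC (h1 (by simp))⟩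

/-- There exists `f : ℕ × ℕ → ℕ` such that every (finite) matroid `M` with the
`(s,2s,t,2t)`-property and `|E(M)| ≥ f(s,t)` is an `(s,t)`-spike. -/
theorem statement0 :
    ∃ f : ℕ × ℕ → ℕ, ∀ (s t : ℕ), 0 < s → 0 < t →
      ∀ {α : Type u} (M : Matroid α), M.E.Finite →
        M.HasProp s (2 * s) t (2 * t) → f (s, t) ≤ M.E.ncard →
        ∃ (m : ℕ) (A : Fin m → Set α), M.IsSpike s t A := by
  classical
  refine ⟨fun p => 2 * p.1 + 2 * p.2 +
    auxN (2 * p.1) (p.2 - 1) (3 * (2 * p.1 + 2 * p.2) + 1) +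
    auxN (2 * p.2) (p.1 - 1) (3 * (2 * p.1 + 2 * p.2) + 1), ?_⟩
  intro s t hs ht α M hE hprop hn
  simp only at hn
  obtain ⟨hpc, hpd⟩ := hprop
  have hEd : (M✶).E = M.E := rfl
  have hC := aux_conv M s hs hpc
  have hD : ∀ T : Finset α, (T : Set α) ⊆ M.E → T.card = t →
      ∃ D : Finset α, M✶.IsCircuit (D : Set α) ∧ D.card = 2 * t ∧ T ⊆ D :=
    aux_conv M✶ t ht hpd
  have hCe := aux_elem M hE s hs (by omega) hC
  have hDe := aux_elem M✶ hE t ht (by rw [hEd]; omega) hD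
  have HD := aux_H M hE (2 * s) t (by omega) ht hCe hD (3 * (2 * s + 2 * t)) (by omega)
  have HC := aux_H M✶ hE (2 * t) s (by omega) hs hDe (by rw [dual_dual]; exact hC)
    (3 * (2 * s + 2 * t)) (by rw [hEd]; omega)
  rw [dual_dual] at HC
  have hpair := fun (x : α) (hx : x ∈ M.E) =>
    aux_pair (fun C => M.IsCircuit (C : Set α) ∧ C.card = 2 * s)
      (fun D => M✶.IsCircuit (D : Set α) ∧ D.card = 2 * t) (2 * s) (2 * t)
      (fun _ h => h.2.le) (fun _ h => h.2.le)
      (fun C D hC hD h => by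
        obtain ⟨e, he⟩ := Finset.card_eq_one.1 h
        refine hC.1.inter_isCocircuit_ne_singleton hD.1 (e := e) ?_
        have := congrArg (fun F : Finset α => (F : Set α)) he
        simpa using this) x (HC x hx) (HD x hx)
  have hpair' : ∀ x : α, ∃ z, x ∈ M.E → z ≠ x ∧
      (∀ C : Finset α, (M.IsCircuit (C : Set α) ∧ C.card = 2 * s) → x ∈ C → z ∈ C) ∧
      (∀ D : Finset α, (M✶.IsCircuit (D : Set α) ∧ D.card = 2 * t) → x ∈ D → z ∈ D) ∧
      ∃ C C' : Finset α, (M.IsCircuit (C : Set α) ∧ C.card = 2 * s) ∧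
        (M.IsCircuit (C' : Set α) ∧ C'.card = 2 * s) ∧ z ∈ C ∧ z ∈ C' ∧
        ∀ w ∈ C, w ∈ C' → w = x ∨ w = z := by
    intro x
    by_cases hx : x ∈ M.E
    · obtain ⟨z, hz⟩ := hpair x hx
      exact ⟨z, fun _ => hz⟩
    · exact ⟨x, fun h => absurd h hx⟩
  choose π hπ using hpair'
  have hπE : ∀ x ∈ M.E, π x ∈ M.E := by
    intro x hx
    obtain ⟨_, _, _, C, C', hC, _, hz, _⟩ := hπ x hx
    exact hC.1.subset_ground hz
  have hinv : ∀ x ∈ M.E, π (π x) = x := by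
    intro x hx
    obtain ⟨_, _, _, C, C', hC, hC', hz, hz', hw⟩ := hπ x hx
    obtain ⟨h1, h2, _⟩ := hπ (π x) (hπE x hx)
    rcases hw _ (h2 C hC hz) (h2 C' hC' hz') with h | h
    · exact h
    · exact absurd h h1
  set F : Finset (Set α) := hE.toFinset.image (fun x => ({x, π x} : Set α)) with hF
  have hFmem : ∀ B ∈ F, ∃ x ∈ M.E, B = {x, π x} := by
    intro B hB
    simp [hF] at hB
    obtain ⟨x, hx, rfl⟩ := hB
    exact ⟨x, hx, rfl⟩
  let A : Fin F.card → Set α := fun i => (F.equivFin.symm i : Set α)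
  have hAF : ∀ i, A i ∈ F := fun i => (F.equivFin.symm i).2
  choose a haE hA using fun i => hFmem (A i) (hAF i)
  have hpe : ∀ x ∈ M.E, ∀ y ∈ ({x, π x} : Set α), ({x, π x} : Set α) = {y, π y} := by
    intro x hx y hy
    rcases hy with rfl | hy
    · rfl
    · rw [Set.mem_singleton_iff] at hy
      rw [hy, hinv x hx, Set.pair_comm]
  have hdis : Pairwise (Function.onFun Disjoint A) := by
    intro i j hij
    rw [Function.onFun, Set.disjoint_left]
    intro y hyi hyj
    apply hij
    have h1 : A i = A j := by
      rw [hA i] at hyi ⊢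
      rw [hA j] at hyj ⊢
      rw [hpe _ (haE i) y hyi, hpe _ (haE j) y hyj]
    exact F.equivFin.symm.injective (Subtype.ext h1)
  have h2 : ∀ i, (A i).ncard = 2 := by
    intro i
    rw [hA i]
    exact Set.ncard_pair (hπ _ (haE i)).1.symm
  have hun : (⋃ i, A i) = M.E := by
    apply Set.Subset.antisymm
    · apply Set.iUnion_subset
      intro i
      rw [hA i]
      intro y hy
      rcases hy with rfl | hy
      · exact haE i
      · rw [Set.mem_singleton_iff] at hy
        rw [hy]; exact hπE _ (haE i)
    · intro x hx
      have hxF : ({x, π x} : Set α) ∈ F := by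
        simp only [hF, Finset.mem_image, Set.Finite.mem_toFinset]
        exact ⟨x, hx, rfl⟩
      refine Set.mem_iUnion.2 ⟨F.equivFin ⟨_, hxF⟩, ?_⟩
      simp [A]
  refine ⟨F.card, A, ?_, hun, hdis, h2, ?_, ?_⟩
  · have h3 : M.E.ncard ≤ 2 * F.card := by
      rw [← hun]
      have h4 : (⋃ i, A i) =
          ((Finset.univ.biUnion (fun i => ({a i, π (a i)} : Finset α)) : Finset α) : Set α) := by
        simp [hA]
      rw [h4, Set.ncard_coe_finset]
      refine Finset.card_biUnion_le.trans ?_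
      refine (Finset.sum_le_card_nsmul _ _ 2 (fun i _ => Finset.card_le_two)).trans ?_
      simp [mul_comm]
    have : s + t ≤ F.card := by omega
    omega
  · intro I hI
    obtain ⟨C, hC1, hC2⟩ := aux_union M.E (fun C => M.IsCircuit (C : Set α)) s hC π
      (fun C h1 h2 x hx hxC => (hπ x hx).2.1 C ⟨h1, h2⟩ hxC) A a haE
      (fun i => (hπ _ (haE i)).1) hA hdis I hI
    rw [← hC2]
    exact hC1
  · intro I hI
    obtain ⟨C, hC1, hC2⟩ := aux_union M.E (fun C => M✶.IsCircuit (C : Set α)) t hD π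
      (fun C h1 h2 x hx hxC => (hπ x hx).2.2.1 C ⟨h1, h2⟩ hxC) A a haE
      (fun i => (hπ _ (haE i)).1) hA hdis I hI
    rw [← hC2]
    exact hC1
end

section
/- Let s and t be positive integers, let M be a matroid with the (s,2s,t,2t)-property, and let C*_1, C*_2, …, C*_{s−1} be pairwise disjoint cocircuits of M. Let Y = E(M) − ⋃_{i∈[s−1]} C*_i. Then for every y ∈ Y there is a 2s-element circuit C_y of M containing y such that either (1) |C_y ∩ C*_i| = 2 for all i ∈ [s−1], or (2) |C_y ∩ C*_j| = 3 for some j ∈ [s−1] and |C_y ∩ C*_i| = 2 for all i ∈ [s−1] − {j}. Moreover, if C_y satisfies (2), then there are at most s + 2t − 1 elements w ∈ Y such that (C_y − {y}) ∪ {w} is a circuit of M. -/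
open Set Function

universe u

open Matroid

theorem aux_insert {α : Type u} {M : Matroid α} {J K : Set α} {z : α} (hJ : M.Indep J)
    (hK : M.IsCocircuit' K) (hJK : Disjoint J K) (hz : z ∈ K) :
    M.Indep (insert z J) ∧ z ∉ J := by
  have hK' : M.IsCocircuit K := hK
  have hzJ : z ∉ J := fun h => (Set.disjoint_left.1 hJK h) hz
  refine ⟨?_, hzJ⟩
  rw [hJ.insert_indep_iff_of_notMem hzJ]
  refine ⟨hK'.subset_ground hz, fun hcl => ?_⟩
  obtain ⟨D, hDs, hD, hzD⟩ := Matroid.exists_isCircuit_of_mem_closure hcl hzJ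
  apply hD.inter_isCocircuit_ne_singleton hK' (e := z)
  ext x
  constructor
  · rintro ⟨hx, hxK⟩
    rcases hDs hx with h | h
    · exact h
    · exact absurd hxK (Set.disjoint_left.1 hJK h)
  · rintro rfl
    exact ⟨hzD, hz⟩

theorem aux_extend {α : Type u} {ι : Type} {M : Matroid α} {J : Set α}
    (hJ : M.Indep J) (hJf : J.Finite) (C : ι → Set α) (hC : ∀ i, M.IsCocircuit' (C i))
    (hdj : Pairwise (Function.onFun Disjoint C)) (hJC : ∀ i, Disjoint J (C i))
    (z : ι → α) (hz : ∀ i, z i ∈ C i) (A : Finset ι) :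
    M.Indep (J ∪ z '' A) ∧ (J ∪ z '' A).ncard = J.ncard + A.card := by
  classical
  induction A using Finset.induction_on with
  | empty => simpa using hJ
  | insert a A ha ih =>
    have hd : Disjoint (J ∪ z '' A) (C a) := by
      rw [Set.disjoint_left]
      rintro x (hx | ⟨b, hb, rfl⟩) hxa
      · exact Set.disjoint_left.1 (hJC a) hx hxa
      · have hne : b ≠ a := by rintro rfl; exact ha hb
        exact Set.disjoint_left.1 (hdj hne) (hz b) hxa
    obtain ⟨h1, h2⟩ := aux_insert ih.1 (hC a) hd (hz a)
    have he : J ∪ z '' (insert a A : Finset ι) = insert (z a) (J ∪ z '' A) := by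
      rw [Finset.coe_insert, Set.image_insert_eq, Set.union_insert]
    rw [he]
    refine ⟨h1, ?_⟩
    rw [Set.ncard_insert_of_notMem h2 (hJf.union (A.finite_toSet.image z)), ih.2,
      Finset.card_insert_of_notMem ha]
    omega

/-- Let `M` have the `(s,2s,t,2t)`-property and let `C 1, …, C (s−1)` be pairwise
disjoint cocircuits, with `Y = E(M) − ⋃ᵢ C i`.  Every `y ∈ Y` lies in a `2s`-element circuit
`Cy` meeting each `C i` in exactly two elements, except possibly one `C j` met in three
elements; moreover, in the latter case there are at most `s + 2t − 1` elements `w ∈ Y` such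
that `(Cy − {y}) ∪ {w}` is a circuit. -/
theorem statement7 {α : Type u} (s t : ℕ) (hs : 0 < s) (ht : 0 < t)
    (M : Matroid α) (hE : M.E.Finite) (hM : M.HasProp s (2 * s) t (2 * t))
    (C : Fin (s - 1) → Set α) (hC : ∀ i, M.IsCocircuit' (C i))
    (hdj : Pairwise (Function.onFun Disjoint C))
    (y : α) (hy : y ∈ M.E \ ⋃ i, C i) :
    ∃ Cy, M.IsCircuit' Cy ∧ Cy.ncard = 2 * s ∧ y ∈ Cy ∧
      ((∀ i, (Cy ∩ C i).ncard = 2) ∨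
        (∃ j, (Cy ∩ C j).ncard = 3 ∧ ∀ i, i ≠ j → (Cy ∩ C i).ncard = 2)) ∧
      ((∃ j, (Cy ∩ C j).ncard = 3 ∧ ∀ i, i ≠ j → (Cy ∩ C i).ncard = 2) →
        {w | w ∈ M.E \ ⋃ i, C i ∧ M.IsCircuit' ((Cy \ {y}) ∪ {w})}.ncard ≤ s + 2 * t - 1) := by
  classical
  have hCne : ∀ i, ∃ c, c ∈ C i := fun i => (show M.IsCocircuit (C i) from hC i).nonempty
  choose c hc using hCne
  have hCE : ∀ i, C i ⊆ M.E := fun i => (show M.IsCocircuit (C i) from hC i).subset_ground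
  have hyC : ∀ i, y ∉ C i := fun i h => hy.2 (Set.mem_iUnion.2 ⟨i, h⟩)
  have hcinj : Function.Injective c := by
    intro a b hab
    by_contra hne
    exact Set.disjoint_left.1 (hdj hne) (hc a) (hab ▸ hc b)
  have hyr : y ∉ Set.range c := by
    rintro ⟨i, rfl⟩
    exact hyC i (hc i)
  have hrn : (Set.range c).ncard = s - 1 := by
    rw [← Set.image_univ, Set.ncard_image_of_injective _ hcinj, Set.ncard_univ, Nat.card_fin]
  obtain ⟨Cy, hCy, hcard, hsub⟩ := hM.1 (insert y (Set.range c))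
    (Set.insert_subset hy.1 (by rintro _ ⟨i, rfl⟩; exact hCE i (hc i)))
    (by rw [Set.ncard_insert_of_notMem hyr (Set.finite_range c), hrn]; omega)
  have hCy' : M.IsCircuit Cy := hCy
  have hyCy : y ∈ Cy := hsub (Set.mem_insert _ _)
  have hcCy : ∀ i, c i ∈ Cy := fun i => hsub (Set.mem_insert_of_mem _ ⟨i, rfl⟩)
  have hCyf : Cy.Finite := hE.subset hCy'.subset_ground
  have h2 : ∀ i, 2 ≤ (Cy ∩ C i).ncard := by
    intro i
    have := hCy'.isCocircuit_inter_nontrivial (show M.IsCocircuit (C i) from hC i)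
      ⟨c i, hcCy i, hc i⟩
    have : Finite (Cy ∩ C i : Set α) := hCyf.inter_of_left _
    exact Set.one_lt_ncard_iff_nontrivial.2 ‹_›
  have hZc : (Cy \ {y}).ncard = 2 * s - 1 := by
    rw [Set.ncard_diff_singleton_of_mem hyCy, hcard]
  have hsum : ∑ i, (Cy ∩ C i).ncard ≤ 2 * s - 1 := by
    rw [← finsum_eq_sum_of_fintype, ← Set.ncard_iUnion_of_finite
      (fun i => hCyf.inter_of_left _)
      (fun i j hij => (hdj hij).mono Set.inter_subset_right Set.inter_subset_right), ← hZc]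
    apply Set.ncard_le_ncard _ hCyf.diff
    intro x hx
    obtain ⟨i, hx1, hx2⟩ := Set.mem_iUnion.1 hx
    refine ⟨hx1, ?_⟩
    rintro rfl
    exact hyC i hx2
  refine ⟨Cy, hCy, hcard, hyCy, ?_, ?_⟩
  · by_cases hall : ∀ i, (Cy ∩ C i).ncard = 2
    · exact Or.inl hall
    · right
      push Not at hall
      obtain ⟨j, hj⟩ := hall
      have hle : ∑ i, (2 + if i = j then 1 else 0) ≤ ∑ i, (Cy ∩ C i).ncard := by
        apply Finset.sum_le_sum
        intro i _
        have := h2 i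
        split_ifs with h
        · subst h; omega
        · omega
      have heq : ∑ i : Fin (s - 1), (2 + if i = j then 1 else 0) = 2 * s - 1 := by
        have := j.2
        simp [Finset.sum_add_distrib]
        omega
      have hall2 := (Finset.sum_eq_sum_iff_of_le (s := Finset.univ)
        (f := fun i => (2 + if i = j then 1 else 0)) (g := fun i => (Cy ∩ C i).ncard)
        (by
          intro i _
          have := h2 i
          split_ifs with h
          · subst h; omega
          · omega)).1 (by omega)
      refine ⟨j, ?_, fun i hij => ?_⟩
      · have := hall2 j (Finset.mem_univ _)
        simp at this
        omega
      · have := hall2 i (Finset.mem_univ _)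
        simp [hij] at this
        omega
  · intro _
    by_contra hcon
    set W := {w | w ∈ M.E \ ⋃ i, C i ∧ M.IsCircuit' ((Cy \ {y}) ∪ {w})} with hW
    have hWE : W ⊆ M.E := fun w hw => hw.1.1
    have hWf : W.Finite := hE.subset hWE
    have hWC : ∀ w ∈ W, ∀ i, w ∉ C i := fun w hw i h => hw.1.2 (Set.mem_iUnion.2 ⟨i, h⟩)
    obtain ⟨T, hTW, hTc⟩ := Set.exists_subset_card_eq (s := W) (n := t) (by omega)
    obtain ⟨K, hK, hKc, hTK⟩ := hM.2 T (hTW.trans hWE) hTc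
    have hKf : K.Finite := hE.subset (show M.IsCocircuit K from hK).subset_ground
    obtain ⟨w, hwT⟩ : T.Nonempty := by
      rw [Set.nonempty_iff_ne_empty]
      rintro rfl
      simp at hTc
      omega
    have hdc : s ≤ (W \ K).ncard := by
      have := Set.le_ncard_diff K W hKf
      omega
    obtain ⟨I, hIW, hIc⟩ := Set.exists_subset_card_eq hdc
    have hIf : I.Finite := hWf.subset (hIW.trans Set.diff_subset)
    have hI : M.Indep I := by
      obtain ⟨D, hD, hDc, hID⟩ := hM.1 I ((hIW.trans Set.diff_subset).trans hWE) hIc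
      apply (show M.IsCircuit D from hD).ssubset_indep
      refine hID.ssubset_of_ne ?_
      rintro rfl
      omega
    obtain ⟨hJ, hwI⟩ := aux_insert hI hK
      (Set.disjoint_left.2 fun x hx => (hIW hx).2) (hTK hwT)
    have hJW : insert w I ⊆ W :=
      Set.insert_subset (hTW hwT) (hIW.trans Set.diff_subset)
    obtain ⟨hJ2, hJ2c⟩ := aux_extend hJ (hIf.insert w) C hC hdj
      (fun i => Set.disjoint_left.2 fun x hx => hWC x (hJW hx) i) c hc Finset.univ
    have hcl : insert w I ∪ c '' (Finset.univ : Finset (Fin (s - 1))) ⊆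
        M.closure (Cy \ {y}) := by
      rintro x (hx | ⟨i, -, rfl⟩)
      · have hxW := (hJW hx).2
        have := (show M.IsCircuit ((Cy \ {y}) ∪ {x}) from hxW).mem_closure_sdiff_singleton_of_mem
          (Or.inr rfl)
        refine M.closure_subset_closure ?_ this
        rintro z ⟨hz1 | hz1, hz2⟩
        · exact hz1
        · exact absurd hz1 hz2
      · apply M.mem_closure_of_mem' _ (hCE i (hc i))
        refine ⟨hcCy i, ?_⟩
        intro h
        exact hyC i (h ▸ hc i)
    have hle := (hJ2.encard_le_eRk_of_subset hcl).trans
      ((M.eRk_closure_eq _).le.trans (M.eRk_le_encard _))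
    have hle2 := ENat.toNat_le_toNat hle (Set.encard_ne_top_iff.2 hCyf.diff)
    change Set.ncard _ ≤ Set.ncard _ at hle2
    rw [hJ2c, hZc, Set.ncard_insert_of_notMem hwI hIf, hIc, Finset.card_univ,
      Fintype.card_fin] at hle2
    omega
end

section
/- Let s and t be positive integers and let M be a matroid with the (s,2s,t,2t)-property. Suppose M has s−1 pairwise disjoint 2t-element cocircuits C*_1, …, C*_{s−1} and, for some positive integer p, there is a set Z ⊆ E(M) − ⋃_{i∈[s−1]} C*_i such that (a) r(Z) ≥ (C(2t,2))^{s−1} · (p + 2(s−1)) (where C(2t,2) is the binomial coefficient), and (b) for each z ∈ Z there exists z' ∈ Z − {z} such that {z,z'} is contained in a 2s-element circuit C of M with |C ∩ C*_i| = 2 for each i ∈ [s−1]. Then there exists a subset Z' ⊆ Z and a partition π = (Z'_1, …, Z'_p) of Z' into p two-element sets such that (1) each circuit of the restriction M|Z' is a union of pairs in π, and (2) the union of any s pairs in π contains a circuit of M. -/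
open Set Function

namespace Matroid

lemma aux_ncard_le {α : Type*} {A B : Set α} (hB : B.Finite) (h : A.encard ≤ B.encard) :
    A.ncard ≤ B.ncard := by
  rw [ncard_def, ncard_def]
  exact ENat.toNat_le_toNat h (by simpa using hB)

/-- Elements of a cocircuit are not spanned by the complement of the cocircuit. -/
lemma aux_notMem_closure {α : Type*} {M : Matroid α} {K A : Set α} {x : α}
    (hK : M.IsCocircuit K) (hx : x ∈ K) (hA : Disjoint A K) : x ∉ M.closure A := by
  intro hcl
  have hxA : x ∉ A := fun h => (Set.disjoint_left.1 hA h hx)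
  obtain ⟨C, hxC, hC, hCi⟩ := (mem_closure_iff_exists_isCircuit hxA).1 hcl
  refine hC.inter_isCocircuit_ne_singleton hK (e := x) ?_
  ext y
  simp only [mem_inter_iff, mem_singleton_iff]
  constructor
  · rintro ⟨hy, hyK⟩
    rcases hxC hy with h | h
    · exact h
    · exact absurd hyK (Set.disjoint_left.1 hA h)
  · rintro rfl
    exact ⟨hCi, hx⟩

lemma aux_key {α : Type*} {M : Matroid α} {ι : Type*} {X : Set α} {z z' : ι → α}
    (hz : Injective z) (hX : M.Indep (X ∪ range z)) (hzX : ∀ i, z i ∉ X)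
    (hne : ∀ i, z i ≠ z' i) (hz'X : ∀ i, z' i ∉ X)
    (hC : ∀ i, M.IsCircuit (insert (z i) (insert (z' i) X))) (i : ι) :
    z i ∉ M.closure (X ∪ ⋃ j ∈ {j | j ≠ i}, {z j, z' j}) ∧
    z' i ∉ M.closure (X ∪ ⋃ j ∈ {j | j ≠ i}, {z j, z' j}) := by
  have hXE : X ⊆ M.E := subset_union_left.trans hX.subset_ground
  have hzE : ∀ i, z i ∈ M.E := fun i => hX.subset_ground (Or.inr ⟨i, rfl⟩)
  have h1 : ∀ j, z' j ∈ M.closure (insert (z j) X) := by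
    intro j
    have := (hC j).mem_closure_sdiff_singleton_of_mem (e := z' j) (by simp)
    refine M.closure_subset_closure ?_ this
    rintro y ⟨hy, hy'⟩
    simp only [mem_insert_iff, mem_singleton_iff] at hy hy' ⊢
    tauto
  have h2 : ∀ j, z j ∈ M.closure (insert (z' j) X) := by
    intro j
    have := (hC j).mem_closure_sdiff_singleton_of_mem (e := z j) (by simp)
    refine M.closure_subset_closure ?_ this
    rintro y ⟨hy, hy'⟩
    simp only [mem_insert_iff, mem_singleton_iff] at hy hy' ⊢
    tauto
  have hsub : (X ∪ ⋃ j ∈ {j | j ≠ i}, {z j, z' j}) ⊆ M.closure ((X ∪ range z) \ {z i}) := by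
    have hXs : X ⊆ (X ∪ range z) \ {z i} := fun y hy =>
      ⟨Or.inl hy, fun h => hzX i (by rw [mem_singleton_iff] at h; rwa [← h])⟩
    have hgr : (X ∪ range z) \ {z i} ⊆ M.E := sdiff_subset.trans hX.subset_ground
    apply union_subset
    · exact M.subset_closure_of_subset hXs hgr
    · refine iUnion₂_subset fun j hj => ?_
      have hzj : z j ∈ (X ∪ range z) \ {z i} := ⟨Or.inr ⟨j, rfl⟩, fun h => hj (hz h)⟩
      rintro y (rfl | rfl)
      · exact M.subset_closure _ hgr hzj
      · exact M.closure_subset_closure (insert_subset hzj hXs) (h1 j)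
  have hA : z i ∉ M.closure (X ∪ ⋃ j ∈ {j | j ≠ i}, {z j, z' j}) := fun h =>
    hX.notMem_closure_sdiff_of_mem (Or.inr ⟨i, rfl⟩)
      (closure_subset_closure_of_subset_closure hsub h)
  refine ⟨hA, fun h => hA ?_⟩
  refine closure_subset_closure_of_subset_closure (insert_subset h ?_) (h2 i)
  exact M.subset_closure_of_subset' subset_union_left hXE

/-- An independent set avoiding disjoint cocircuits can be extended by one element of each. -/
lemma aux_extend {α : Type*} {M : Matroid α} {ι : Type*} (K : ι → Set α)
    (hK : ∀ i, M.IsCocircuit (K i)) (hdj : Pairwise (Function.onFun Disjoint K))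
    (x : ι → α) (hx : ∀ i, x i ∈ K i) (P : Set α) (hP : M.Indep P)
    (hPK : ∀ i, Disjoint P (K i)) (J : Finset ι) : M.Indep (P ∪ x '' J) := by
  classical
  induction J using Finset.induction_on with
  | empty => simpa using hP
  | insert a J ha ih =>
    have : P ∪ x '' (↑(insert a J) : Set ι) = insert (x a) (P ∪ x '' J) := by
      simp [image_insert_eq, union_insert]
    rw [this, ih.insert_indep_iff]
    left
    refine ⟨(hK a).subset_ground (hx a), aux_notMem_closure (hK a) (hx a) ?_⟩
    rw [disjoint_union_left]
    refine ⟨hPK a, ?_⟩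
    rw [Set.disjoint_left]
    rintro _ ⟨j, hj, rfl⟩ hja
    have hne : j ≠ a := by rintro rfl; exact ha hj
    exact Set.disjoint_left.1 (hdj hne) (hx j) hja

lemma aux_rk {α : Type*} (M : Matroid α) (hE : M.E.Finite) (Z : Set α) :
    ∃ I, M.Indep I ∧ I ⊆ Z ∧ I.ncard = M.rk' Z := by
  have := Nat.sSup_mem (s := {n : ℕ | ∃ I, M.Indep I ∧ I ⊆ Z ∧ I.ncard = n})
    ⟨0, ∅, M.empty_indep, empty_subset _, by simp⟩
    ⟨M.E.ncard, by
      rintro n ⟨I, hI, -, rfl⟩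
      exact ncard_le_ncard hI.subset_ground hE⟩
  exact this

lemma aux_final {α : Type*} {M : Matroid α} (hE : M.E.Finite) {s p : ℕ} (hs : 0 < s)
    (Cs : Fin (s - 1) → Set α) (hdj : Pairwise (Function.onFun Disjoint Cs))
    (hcc : ∀ i, M.IsCocircuit (Cs i)) (X : Set α) (hXc : X.ncard ≤ 2 * (s - 1))
    (hXC : ∀ i, (X ∩ Cs i).Nonempty)
    (z z' : Fin p → α) (hz : Injective z) (hX : M.Indep (X ∪ range z)) (hzX : ∀ i, z i ∉ X)
    (hne : ∀ i, z i ≠ z' i) (hz'X : ∀ i, z' i ∉ X)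
    (hzC : ∀ i j, z i ∉ Cs j) (hzC' : ∀ i j, z' i ∉ Cs j)
    (hC : ∀ i, M.IsCircuit (insert (z i) (insert (z' i) X))) :
      Pairwise (Function.onFun Disjoint fun i => ({z i, z' i} : Set α)) ∧
      (∀ C, M.IsCircuit C → C ⊆ (⋃ i, {z i, z' i}) →
        ∃ I : Finset (Fin p), C = ⋃ i ∈ I, {z i, z' i}) ∧
      (∀ I : Finset (Fin p), I.card = s → ∃ C, M.IsCircuit C ∧ C ⊆ ⋃ i ∈ I, {z i, z' i}) := by
  classical
  have key := aux_key hz hX hzX hne hz'X hC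
  have hgr : ∀ i, {z i, z' i} ⊆ M.E := by
    intro i
    refine Subset.trans ?_ (hC i).subset_ground
    rintro y (rfl | rfl) <;> simp
  have hdisj : Pairwise (Function.onFun Disjoint fun i => ({z i, z' i} : Set α)) := by
    intro i j hij
    rw [Function.onFun, Set.disjoint_left]
    intro y hyi hyj
    have hcl : y ∈ M.closure (X ∪ ⋃ j ∈ {j | j ≠ i}, {z j, z' j}) := by
      refine M.mem_closure_of_mem' (Or.inr ?_) (hgr j hyj)
      exact mem_biUnion (show j ∈ {j | j ≠ i} from hij.symm) hyj
    rcases hyi with rfl | rfl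
    · exact (key i).1 hcl
    · exact (key i).2 hcl
  refine ⟨hdisj, ?_, ?_⟩
  · intro C hCc hCs
    refine ⟨Finset.univ.filter (fun i => z i ∈ C), ?_⟩
    have hiff : ∀ i, z i ∈ C ↔ z' i ∈ C := by
      intro i
      constructor
      · intro h
        by_contra h'
        refine (key i).1 (M.closure_subset_closure ?_ (hCc.mem_closure_sdiff_singleton_of_mem h))
        rintro y ⟨hy, hyz⟩
        right
        obtain ⟨j, hj⟩ := mem_iUnion.1 (hCs hy)
        refine mem_biUnion (show j ∈ {j | j ≠ i} from ?_) hj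
        rintro rfl
        rcases hj with rfl | rfl
        · exact hyz rfl
        · exact h' hy
      · intro h
        by_contra h'
        refine (key i).2 (M.closure_subset_closure ?_ (hCc.mem_closure_sdiff_singleton_of_mem h))
        rintro y ⟨hy, hyz⟩
        right
        obtain ⟨j, hj⟩ := mem_iUnion.1 (hCs hy)
        refine mem_biUnion (show j ∈ {j | j ≠ i} from ?_) hj
        rintro rfl
        rcases hj with rfl | rfl
        · exact h' hy
        · exact hyz rfl
    ext y
    simp only [mem_iUnion, Finset.mem_filter, Finset.mem_univ, true_and, exists_prop]
    constructor
    · intro hy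
      obtain ⟨j, hj⟩ := mem_iUnion.1 (hCs hy)
      refine ⟨j, ?_, hj⟩
      rcases hj with rfl | rfl
      · exact hy
      · exact (hiff j).2 hy
    · rintro ⟨j, hj, rfl | rfl⟩
      · exact hj
      · exact (hiff j).1 hj
  · intro I hI
    by_contra hcon
    set P : Set α := ⋃ i ∈ I, {z i, z' i} with hPdef
    have hPE : P ⊆ M.E := iUnion₂_subset fun i _ => hgr i
    have hPi : M.Indep P := by
      by_contra hd
      obtain ⟨C, hCP, hCc⟩ := Dep.exists_isCircuit_subset (M := M) (X := P) ⟨hd, hPE⟩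
      exact hcon ⟨C, hCc, hCP⟩
    choose x hx using hXC
    have hPK : ∀ j, Disjoint P (Cs j) := by
      intro j
      rw [Set.disjoint_left]
      intro y hy
      obtain ⟨i, hi, rfl | rfl⟩ := mem_iUnion₂.1 hy
      · exact hzC i j
      · exact hzC' i j
    have hQ := aux_extend Cs hcc hdj x (fun i => (hx i).2) P hPi hPK Finset.univ
    have hsub : P ∪ x '' (Finset.univ : Finset (Fin (s-1))) ⊆ M.closure (X ∪ z '' I) := by
      have hg : X ∪ z '' I ⊆ M.E :=
        (union_subset_union_right X (image_subset_range z _)).trans hX.subset_ground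
      apply union_subset
      · refine iUnion₂_subset fun i hi => ?_
        have hzi : z i ∈ X ∪ z '' I := Or.inr ⟨i, hi, rfl⟩
        rintro y (rfl | rfl)
        · exact M.subset_closure _ hg hzi
        · have := (hC i).mem_closure_sdiff_singleton_of_mem (e := z' i) (by simp)
          refine M.closure_subset_closure ?_ this
          rintro y ⟨hy, hy'⟩
          rcases hy with rfl | rfl | hy
          · exact hzi
          · exact absurd rfl hy'
          · exact Or.inl hy
      · rintro _ ⟨j, -, rfl⟩
        exact M.subset_closure _ hg (Or.inl (hx j).1)
    have hle := hQ.encard_le_eRk_of_subset hsub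
    rw [eRk_closure_eq] at hle
    have hle2 := hle.trans (M.eRk_le_encard _)
    have hXfin : X.Finite := hE.subset (subset_union_left.trans hX.subset_ground)
    have hzfin : (z '' (I : Set (Fin p))).Finite := I.finite_toSet.image z
    have hXzfin : (X ∪ z '' (I : Set (Fin p))).Finite := hXfin.union hzfin
    have hle3 := aux_ncard_le hXzfin hle2
    have c1 : (X ∪ z '' (I : Set (Fin p))).ncard ≤ 2 * (s - 1) + s := by
      refine (ncard_union_le _ _).trans (Nat.add_le_add hXc ?_)
      refine (ncard_image_le I.finite_toSet).trans ?_
      simp [hI]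
    have c2 : (P ∪ x '' (Finset.univ : Finset (Fin (s-1)))).ncard = 2 * s + (s - 1) := by
      rw [ncard_union_eq ?_ (hE.subset hPE) (Finset.finite_toSet _ |>.image x)]
      · congr 1
        · have hPf : P = ((I.biUnion fun i => ({z i, z' i} : Finset α)) : Finset α) := by
            rw [hPdef]; simp
          rw [hPf, ncard_coe_finset, Finset.card_biUnion]
          · rw [Finset.sum_congr rfl (fun i _ => Finset.card_pair (hne i))]
            simp [hI, mul_comm]
          · intro i _ j _ hij
            have := hdisj hij
            rw [Function.onFun, ← Finset.disjoint_coe]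
            simp only [Finset.coe_insert, Finset.coe_singleton]
            exact this
        · rw [ncard_image_of_injective]
          · simp
          · intro i j hij
            by_contra h
            exact Set.disjoint_left.1 (hdj h) (hx i).2 (hij ▸ (hx j).2)
      · rw [Set.disjoint_left]
        rintro _ hy ⟨j, -, rfl⟩
        exact Set.disjoint_left.1 (hPK j) hy (hx j).2
    omega

end Matroid

universe u

open Matroid

/-- Let `M` have the `(s,2s,t,2t)`-property, with `s − 1` pairwise disjoint
`2t`-element cocircuits `Cs i` and a set `Z ⊆ E(M) − ⋃ᵢ Cs i` satisfying (a) and (b).  Then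
there are `Z' ⊆ Z` and a partition `π = (π 1, …, π p)` of `Z'` into pairs such that each
circuit of `M|Z'` is a union of pairs in `π`, and the union of any `s` pairs in `π` contains a
circuit of `M`. -/
theorem statement10 {α : Type u} (s t p : ℕ) (hs : 0 < s) (ht : 0 < t) (hp : 0 < p)
    (M : Matroid α) (hE : M.E.Finite) (hM : M.HasProp s (2 * s) t (2 * t))
    (Cs : Fin (s - 1) → Set α) (hdj : Pairwise (Function.onFun Disjoint Cs))
    (hcc : ∀ i, M.IsCocircuit' (Cs i) ∧ (Cs i).ncard = 2 * t)
    (Z : Set α) (hZ : Z ⊆ M.E \ ⋃ i, Cs i)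
    (ha : (Nat.choose (2 * t) 2) ^ (s - 1) * (p + 2 * (s - 1)) ≤ M.rk' Z)
    (hb : ∀ z ∈ Z, ∃ z' ∈ Z \ {z}, ∃ C, M.IsCircuit' C ∧ C.ncard = 2 * s ∧
      {z, z'} ⊆ C ∧ ∀ i, (C ∩ Cs i).ncard = 2) :
    ∃ Z' ⊆ Z, ∃ π : Fin p → Set α,
      (⋃ i, π i) = Z' ∧ Pairwise (Function.onFun Disjoint π) ∧ (∀ i, (π i).ncard = 2) ∧
      (∀ C, (M ↾ Z').IsCircuit' C → ∃ I : Finset (Fin p), C = ⋃ i ∈ I, π i) ∧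
      (∀ I : Finset (Fin p), I.card = s → ∃ C, M.IsCircuit' C ∧ C ⊆ ⋃ i ∈ I, π i) := by
  classical
  have hcc' : ∀ i, M.IsCocircuit (Cs i) := fun i => (hcc i).1
  have hCfin : ∀ i, (Cs i).Finite := fun i => hE.subset (hcc' i).subset_ground
  have hZC : ∀ z ∈ Z, ∀ j, z ∉ Cs j := fun z hz j h => (hZ hz).2 (mem_iUnion.2 ⟨j, h⟩)
  have hZE : Z ⊆ M.E := fun z hz => (hZ hz).1
  obtain ⟨I, hI, hIZ, hIc⟩ := aux_rk M hE Z
  have hb' : ∀ z, ∃ z', ∃ C, z ∈ Z → (z' ∈ Z ∧ z' ≠ z ∧ M.IsCircuit C ∧ C.ncard = 2 * s ∧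
      z ∈ C ∧ z' ∈ C ∧ ∀ i, (C ∩ Cs i).ncard = 2) := by
    intro z
    by_cases hz : z ∈ Z
    · obtain ⟨z', hz', C, hC, hCc, hs, hi⟩ := hb z hz
      exact ⟨z', C, fun _ => ⟨hz'.1, hz'.2, hC, hCc, hs (by simp), hs (by simp), hi⟩⟩
    · exact ⟨z, ∅, fun h => absurd h hz⟩
  choose w C hwC using hb'
  have hIfin : I.Finite := hE.subset hI.subset_ground
  let T : Finset (Fin (s - 1) → Finset α) :=
    Fintype.piFinset fun i => Finset.powersetCard 2 (hCfin i).toFinset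
  have hTc : T.card = (Nat.choose (2 * t) 2) ^ (s - 1) := by
    simp only [T, Fintype.card_piFinset, Finset.card_powersetCard]
    rw [Finset.prod_congr rfl (g := fun _ => Nat.choose (2 * t) 2)]
    · simp
    · intro i _
      rw [← ncard_eq_toFinset_card _ (hCfin i), (hcc i).2]
  have hTne : T.Nonempty := by
    rw [← Finset.card_pos, hTc]
    exact pow_pos (Nat.choose_pos (by omega)) _
  let f : α → Fin (s - 1) → Finset α := fun z i => (hCfin i).toFinset.filter (· ∈ C z)
  have hfc : ∀ z i, ((f z i : Finset α) : Set α) = C z ∩ Cs i := by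
    intro z i
    ext y
    simp [f, and_comm]
  have hfT : ∀ z ∈ hIfin.toFinset, f z ∈ T := by
    intro z hz
    have hz' : z ∈ I := by simpa using hz
    simp only [T, Fintype.mem_piFinset, Finset.mem_powersetCard]
    intro i
    refine ⟨Finset.filter_subset _ _, ?_⟩
    rw [← ncard_coe_finset, hfc]
    exact (hwC z (hIZ hz')).2.2.2.2.2.2 i
  obtain ⟨g, hg, hgc⟩ := Finset.exists_le_card_fiber_of_mul_le_card_of_maps_to
    (n := p + 2 * (s - 1)) hfT hTne (by
      rw [hTc, ← ncard_eq_toFinset_card _ hIfin, hIc]; exact ha)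
  set J := hIfin.toFinset.filter (fun z => f z = g) with hJ
  have hJI : ∀ z ∈ J, z ∈ I := fun z hz => by
    have := (Finset.mem_filter.1 hz).1
    simpa using this
  have hJf : ∀ z ∈ J, f z = g := fun z hz => (Finset.mem_filter.1 hz).2
  have hgs : ∀ i, g i ⊆ (hCfin i).toFinset ∧ (g i).card = 2 := by
    intro i
    have := Fintype.mem_piFinset.1 hg i
    exact Finset.mem_powersetCard.1 this
  have hgC : ∀ i, (g i : Set α) ⊆ Cs i := by
    intro i y hy
    have := (hgs i).1 hy
    simpa using this
  let XF : Finset α := Finset.univ.biUnion g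
  have hXFc : XF.card = 2 * (s - 1) := by
    simp only [XF]
    rw [Finset.card_biUnion]
    · simp [hgs, mul_comm]
    · intro i _ j _ hij
      rw [Function.onFun, ← Finset.disjoint_coe]
      exact (hdj hij).mono (hgC i) (hgC j)
  have hXCs : ∀ y ∈ XF, ∃ i, y ∈ Cs i := by
    intro y hy
    obtain ⟨i, -, hi⟩ := Finset.mem_biUnion.1 hy
    exact ⟨i, hgC i hi⟩
  have hXZ : ∀ y ∈ Z, y ∉ XF := fun y hy h => by
    obtain ⟨i, hi⟩ := hXCs y h
    exact hZC y hy i hi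
  have hCeq : ∀ z ∈ J, C z = insert z (insert (w z) (XF : Set α)) := by
    intro z hz
    have hzZ := hIZ (hJI z hz)
    obtain ⟨h1, h2, h3, h4, h5, h6, h7⟩ := hwC z hzZ
    have hXsub : (XF : Set α) ⊆ C z := by
      intro y hy
      obtain ⟨i, -, hi⟩ := Finset.mem_biUnion.1 (Finset.mem_coe.1 hy)
      rw [← hJf z hz] at hi
      have : y ∈ ((f z i : Finset α) : Set α) := hi
      rw [hfc] at this
      exact this.1
    symm
    apply eq_of_subset_of_ncard_le
    · exact insert_subset h5 (insert_subset h6 hXsub)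
    · rw [h4]
      have : (insert z (insert (w z) (XF : Set α))) = ((insert z (insert (w z) XF) : Finset α) : Set α) := by
        simp
      rw [this, ncard_coe_finset, Finset.card_insert_of_notMem, Finset.card_insert_of_notMem, hXFc]
      · omega
      · exact hXZ _ h1
      · simp only [Finset.mem_insert, not_or]
        exact ⟨h2.symm, hXZ _ hzZ⟩
    · exact hE.subset h3.subset_ground
  have hJne : J.Nonempty := by
    rw [← Finset.card_pos]; omega
  obtain ⟨z0, hz0⟩ := hJne
  have hXi : M.Indep (XF : Set α) := by
    have hz0Z := hIZ (hJI z0 hz0)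
    have hc := (hwC z0 hz0Z).2.2.1
    refine hc.ssubset_indep ?_
    rw [hCeq z0 hz0]
    refine ⟨fun y hy => Or.inr (Or.inr hy), fun h => hXZ z0 hz0Z ?_⟩
    exact h (Or.inl rfl)
  have hJi : M.Indep (J : Set α) := hI.subset fun y hy => hJI y hy
  obtain ⟨B, hB, hXB⟩ := hXi.subset_isBasis_of_subset
    (subset_union_left : (XF : Set α) ⊆ (XF : Set α) ∪ J)
    (union_subset hXi.subset_ground hJi.subset_ground)
  have hBfin : B.Finite := hE.subset hB.indep.subset_ground
  have hJB : (J : Set α).ncard ≤ B.ncard := by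
    refine aux_ncard_le hBfin ?_
    rw [hB.encard_eq_eRk]
    exact hJi.encard_le_eRk_of_subset subset_union_right
  let K : Finset α := hBfin.toFinset \ XF
  have hKc : p ≤ K.card := by
    have h1 := Finset.le_card_sdiff XF hBfin.toFinset
    rw [ncard_coe_finset, ncard_eq_toFinset_card _ hBfin] at hJB
    simp only [K]
    omega
  have hKJ : ∀ y ∈ K, y ∈ J := by
    intro y hy
    simp only [K, Finset.mem_sdiff, Finite.mem_toFinset] at hy
    rcases hB.subset hy.1 with h | h
    · exact absurd h hy.2
    · exact h
  obtain ⟨L, hLK, hLc⟩ := Finset.exists_subset_card_eq hKc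
  let e := (L.equivFinOfCardEq hLc).symm
  let z : Fin p → α := fun i => (e i : α)
  have hzinj : Injective z := Subtype.val_injective.comp e.injective
  have hzK : ∀ i, z i ∈ K := fun i => hLK (e i).2
  have hzJ : ∀ i, z i ∈ J := fun i => hKJ _ (hzK i)
  have hzZ : ∀ i, z i ∈ Z := fun i => hIZ (hJI _ (hzJ i))
  have hw := fun i => hwC (z i) (hzZ i)
  have hres := aux_final hE hs Cs hdj hcc' (XF : Set α) (by rw [ncard_coe_finset, hXFc])
    (by
      intro i
      have : (g i).Nonempty := by rw [← Finset.card_pos, (hgs i).2]; omega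
      obtain ⟨y, hy⟩ := this
      exact ⟨y, Finset.mem_coe.2 (Finset.mem_biUnion.2 ⟨i, Finset.mem_univ _, hy⟩), hgC i hy⟩)
    z (fun i => w (z i)) hzinj
    (hB.indep.subset (union_subset hXB (by
      rintro _ ⟨i, rfl⟩
      have := hzK i
      simp only [K, Finset.mem_sdiff, Finite.mem_toFinset] at this
      exact this.1)))
    (fun i => hXZ _ (hzZ i)) (fun i => (hw i).2.1.symm) (fun i => hXZ _ (hw i).1)
    (fun i => hZC _ (hzZ i)) (fun i => hZC _ (hw i).1)
    (fun i => by rw [← hCeq _ (hzJ i)]; exact (hw i).2.2.1)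
  obtain ⟨r1, r2, r3⟩ := hres
  have hsubZ : (⋃ i, ({z i, w (z i)} : Set α)) ⊆ Z := by
    refine iUnion_subset fun i => ?_
    rintro y (rfl | rfl)
    · exact hzZ i
    · exact (hw i).1
  refine ⟨_, hsubZ, fun i => {z i, w (z i)}, rfl, r1, fun i => ncard_pair (hw i).2.1.symm, ?_, r3⟩
  intro D hD
  have hD' := (restrict_isCircuit_iff (hsubZ.trans hZE)).1 hD
  exact r2 D hD'.1 hD'.2
end
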